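/- arXiv:1607.05930 — 2 statements merged into one kernel-verified Lean document; each statement's English description precedes it below -/
import Mathlib

section
/- Let G be a graph whose complement Ḡ is connected, triangle-free and has diameter 3. Then G is connected and pc_{1,2}(G) ≤ 3. -/
/-!
Fix vertices `x`, `z` at distance at least `3` in `Gᶜ` and let `L₀ = {x}`, `L₁`, `L₂`, `L₃` be the
layers of vertices at `Gᶜ`-distance `0`, `1`, `2`, `≥ 3` from `x`. Any two vertices in
nonconsecutive layers are adjacent in `G`; color the `L₀L₃` edges `0`, the `L₁L₃` and `L₂L₃` edges
`1`, and all other edges `2`. Only pairs adjacent in `Gᶜ` need a longer path, and they are joined by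
* `x - z - v` if they lie in `L₀` and `L₁`;
* `u - z - x - v` if they lie in `L₁` and `L₂`;
* `u - x - v` if they lie in `L₂` and `L₃`;
* `u - x - z - a - v` if they lie in `L₂`, where `a ∈ L₁` is a `Gᶜ`-neighbor of `u`;
* `u - x - b - v` if they lie in `L₃` and `u` is no farther from `x` than `v`, where `b ∈ L₂` is
  a `Gᶜ`-neighbor of `u` if `u` is at distance `3` from `x`, and arbitrary otherwise.
Two vertices of `L₁` are never adjacent in `Gᶜ`, because `Gᶜ` has no triangle; for the same reason
`av` and, when `b` is a `Gᶜ`-neighbor of `u`, also `bv` are edges of `G`.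
-/

open SimpleGraph

/-- A walk is *distance `ℓ`-proper* with respect to an edge-coloring `c` if any two
edges whose positions along the walk differ by at most `ℓ` receive distinct colors
(equivalently, no two edges of the same color appear with fewer than `ℓ` edges in
between on the walk). -/
def SimpleGraph.Walk.IsDistProper {V : Type*} {G : SimpleGraph V} {u v : V}
    (ℓ : ℕ) (c : Sym2 V → ℕ) (p : G.Walk u v) : Prop :=
  ∀ (i j : ℕ) (hi : i < p.edges.length) (hj : j < p.edges.length),
    i < j → j ≤ i + ℓ → c (p.edges[i]'hi) ≠ c (p.edges[j]'hj)

/-- `c` is a `(1,ℓ)`-proper-path coloring of `G` using at most `k` colors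
(the colors of edges of `G` lie in `{0, …, k-1}`): every pair of distinct vertices
is joined by a distance `ℓ`-proper path. -/
def SimpleGraph.IsPCColoring {V : Type*} (G : SimpleGraph V) (ℓ k : ℕ)
    (c : Sym2 V → ℕ) : Prop :=
  (∀ e ∈ G.edgeSet, c e < k) ∧
  ∀ u v : V, u ≠ v → ∃ p : G.Walk u v, p.IsPath ∧ p.IsDistProper ℓ c

/-- The `(1,ℓ)`-proper connection number `pc_{1,ℓ}(G)`: the minimum number of colors
in an edge-coloring of `G` such that every pair of distinct vertices is connected by
a distance `ℓ`-proper path. -/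
noncomputable def SimpleGraph.pc {V : Type*} (G : SimpleGraph V) (ℓ : ℕ) : ℕ :=
  sInf {k | ∃ c : Sym2 V → ℕ, G.IsPCColoring ℓ k c}

section DistProper

variable {V : Type*} {G : SimpleGraph V} {ℓ k : ℕ} {c : Sym2 V → ℕ} {u v w : V}

@[simp]
lemma isDistProper_nil : (Walk.nil : G.Walk u u).IsDistProper ℓ c := by
  simp [Walk.IsDistProper]

@[simp]
lemma isDistProper_cons_iff {h : G.Adj u v} {p : G.Walk v w} :
    (Walk.cons h p).IsDistProper ℓ c ↔
      (∀ e ∈ p.edges.take ℓ, c s(u, v) ≠ c e) ∧ p.IsDistProper ℓ c := by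
  simp only [Walk.IsDistProper, Walk.edges_cons, List.length_cons]
  constructor
  · refine fun hp ↦ ⟨fun e he ↦ ?_, fun i j hi hj hij hjℓ ↦ ?_⟩
    · obtain ⟨j, hj, rfl⟩ := List.mem_take_iff_getElem.mp he
      simpa using hp 0 (j + 1) (by omega) (by omega) (by omega) (by omega)
    · simpa using hp (i + 1) (j + 1) (by omega) (by omega) (by omega) (by omega)
  · rintro ⟨hhead, htail⟩ (_ | i) (_ | j) hi hj hij hjℓ
    · omega
    · exact hhead _ (List.mem_take_iff_getElem.mpr ⟨j, by omega, rfl⟩)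
    · omega
    · exact htail i j (by omega) (by omega) (by omega) (by omega)

lemma isDistProper_reverse {p : G.Walk u v} (hp : p.IsDistProper ℓ c) :
    p.reverse.IsDistProper ℓ c := by
  intro i j hi hj hij hjℓ
  simp only [Walk.edges_reverse, List.length_reverse, List.getElem_reverse] at hi hj ⊢
  exact (hp _ _ _ _ (by omega) (by omega)).symm

variable (G ℓ c u v) in
/-- The vertices `u` and `v` are connected by a distance `ℓ`-proper path of `G` with respect to
the edge-coloring `c`. -/
def DistProperJoined : Prop :=
  ∃ p : G.Walk u v, p.IsPath ∧ p.IsDistProper ℓ c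

lemma DistProperJoined.symm (h : DistProperJoined G ℓ c u v) : DistProperJoined G ℓ c v u := by
  obtain ⟨p, hpath, hproper⟩ := h
  exact ⟨p.reverse, hpath.reverse, isDistProper_reverse hproper⟩

lemma distProperJoined_of_adj (h : G.Adj u v) : DistProperJoined G ℓ c u v :=
  ⟨h.toWalk, .of_adj h, by simp⟩

lemma connected_of_isPCColoring [Nonempty V] (h : G.IsPCColoring ℓ k c) : G.Connected where
  preconnected u v := by
    obtain rfl | huv := eq_or_ne u v
    · exact .refl u
    · exact (h.2 u v huv).nonempty

end DistProper

section Distance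

variable {V : Type*} {H : SimpleGraph V} {u v : V}

lemma exists_dist_eq_and_dist_eq {m n : ℕ} (h : H.dist u v = m + n) :
    ∃ w, H.dist u w = m ∧ H.dist w v = n := by
  obtain h0 | h0 := eq_or_ne (H.dist u v) 0
  · exact ⟨u, by rw [dist_self]; omega, by omega⟩
  obtain ⟨p, hp⟩ := exists_walk_of_dist_ne_zero h0
  refine ⟨p.getVert m, ?_, ?_⟩
  · rw [← length_eq_dist_of_subwalk hp (p.isSubwalk_take m), Walk.take_length]
    omega
  · rw [← length_eq_dist_of_subwalk hp (p.isSubwalk_drop m), Walk.drop_length]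
    omega

lemma exists_lt_dist_of_lt_ediam {n : ℕ} (hc : H.Connected) (h : n < H.ediam) :
    ∃ u v, n < H.dist u v := by
  rw [ediam_def, lt_iSup_iff] at h
  obtain ⟨⟨u, v⟩, huv⟩ := h
  rw [← (hc u v).coe_dist_eq_edist] at huv
  exact ⟨u, v, by exact_mod_cast huv⟩

end Distance

section Layers

variable {V : Type*} {G : SimpleGraph V} {x z u v : V}

lemma isClique_neighborSet_compl (htf : Gᶜ.CliqueFree 3) (a : V) :
    G.IsClique (Gᶜ.neighborSet a) :=
  (isIndepSet_compl G).mp (isIndepSet_neighborSet_of_triangleFree _ htf a)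

variable (G x) in
/-- The layer of `v` around the base vertex `x`: the distance from `x` to `v` in the complement
of `G`, with all distances from `3` on merged into the single layer `3`. -/
noncomputable def complLayer (v : V) : ℕ :=
  min (Gᶜ.dist x v) 3

lemma complLayer_self : complLayer G x x = 0 := by
  simp [complLayer]

lemma complLayer_le_three : complLayer G x v ≤ 3 :=
  min_le_right _ _

lemma eq_of_complLayer_eq_zero (hc : Gᶜ.Connected) (hv : complLayer G x v = 0) : x = v :=
  hc.dist_eq_zero_iff.mp (by grind [complLayer])

lemma complLayer_le_succ (h : Gᶜ.Adj u v) : complLayer G x v ≤ complLayer G x u + 1 := by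
  have := h.diff_dist_adj (u := x)
  grind [complLayer]

variable (x) in
lemma adj_of_complLayer_add_two_le (h : complLayer G x u + 2 ≤ complLayer G x v) :
    G.Adj u v := by
  by_contra hnadj
  have hadj : Gᶜ.Adj u v := (compl_adj ..).mpr ⟨by rintro rfl; omega, hnadj⟩
  have := complLayer_le_succ (x := x) hadj
  omega

lemma exists_compl_adj_complLayer_eq {n : ℕ} (hn : n < 2)
    (h : complLayer G x v = n + 1) : ∃ a, Gᶜ.Adj a v ∧ complLayer G x a = n := by
  obtain ⟨a, hxa, hav⟩ : ∃ a, Gᶜ.dist x a = n ∧ Gᶜ.dist a v = 1 :=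
    exists_dist_eq_and_dist_eq (by grind [complLayer])
  exact ⟨a, dist_eq_one_iff_adj.mp hav, by grind [complLayer]⟩

lemma not_compl_adj_of_complLayer_eq_one (htf : Gᶜ.CliqueFree 3)
    (hu : complLayer G x u = 1) (hv : complLayer G x v = 1) : ¬ Gᶜ.Adj u v := by
  have hxu : Gᶜ.Adj x u := dist_eq_one_iff_adj.mp (by grind [complLayer])
  have hxv : Gᶜ.Adj x v := dist_eq_one_iff_adj.mp (by grind [complLayer])
  exact fun huv ↦ ((compl_adj ..).mp huv).2 (isClique_neighborSet_compl htf x hxu hxv huv.ne)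

lemma exists_complLayer_eq_two_and_adj (htf : Gᶜ.CliqueFree 3) (hadj : Gᶜ.Adj u v)
    (hu : 3 ≤ Gᶜ.dist x u) (huv : Gᶜ.dist x u ≤ Gᶜ.dist x v) :
    ∃ b, complLayer G x b = 2 ∧ G.Adj b v := by
  obtain ⟨b, hxb, hbu⟩ : ∃ b, Gᶜ.dist x b = 2 ∧ Gᶜ.dist b u = Gᶜ.dist x u - 2 :=
    exists_dist_eq_and_dist_eq (by omega)
  have hb : complLayer G x b = 2 := by grind [complLayer]
  have hbv : b ≠ v := by rintro rfl; omega
  refine ⟨b, hb, ?_⟩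
  obtain hu3 | hu4 := hu.eq_or_lt
  · have hub : Gᶜ.Adj u b := (dist_eq_one_iff_adj.mp (by omega)).symm
    exact isClique_neighborSet_compl htf u hub hadj hbv
  · by_contra hnadj
    have hbv' : Gᶜ.Adj b v := (compl_adj ..).mpr ⟨hbv, hnadj⟩
    have := hbv'.diff_dist_adj (u := x)
    omega

variable (G x) in
/-- The edge-coloring of `G` by the layers of the endpoints: color `0` between the layers `0` and
`3`, color `1` between the layer `3` and the layers `1` and `2`, and color `2` elsewhere. -/
noncomputable def layerColoring (e : Sym2 V) : ℕ :=
  if e.map (complLayer G x) = s(0, 3) then 0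
  else if e.map (complLayer G x) = s(1, 3) ∨ e.map (complLayer G x) = s(2, 3) then 1
  else 2

lemma layerColoring_lt_three (e : Sym2 V) : layerColoring G x e < 3 := by
  unfold layerColoring
  split_ifs <;> omega

lemma distProperJoined_of_complLayer_zero_one (hz : complLayer G x z = 3)
    (hu : complLayer G x u = 0) (hv : complLayer G x v = 1) :
    DistProperJoined G 2 (layerColoring G x) u v := by
  have huz : G.Adj u z := adj_of_complLayer_add_two_le x (by omega)
  have hvz : G.Adj v z := adj_of_complLayer_add_two_le x (by omega)
  refine ⟨.cons huz (.cons hvz.symm .nil), ?_, ?_⟩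
  · grind [Walk.cons_isPath_iff, Walk.support_cons, Walk.support_nil, Walk.IsPath.nil]
  · simp [layerColoring, *]

lemma distProperJoined_of_complLayer_one_two (hz : complLayer G x z = 3)
    (hu : complLayer G x u = 1) (hv : complLayer G x v = 2) :
    DistProperJoined G 2 (layerColoring G x) u v := by
  have hx : complLayer G x x = 0 := complLayer_self
  have huz : G.Adj u z := adj_of_complLayer_add_two_le x (by omega)
  have hxz : G.Adj x z := adj_of_complLayer_add_two_le x (by omega)
  have hxv : G.Adj x v := adj_of_complLayer_add_two_le x (by omega)
  refine ⟨.cons huz (.cons hxz.symm (.cons hxv .nil)), ?_, ?_⟩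
  · grind [Walk.cons_isPath_iff, Walk.support_cons, Walk.support_nil, Walk.IsPath.nil]
  · simp [layerColoring, *]

lemma distProperJoined_of_complLayer_two_two (htf : Gᶜ.CliqueFree 3)
    (hz : complLayer G x z = 3) (hadj : Gᶜ.Adj u v)
    (hu : complLayer G x u = 2) (hv : complLayer G x v = 2) :
    DistProperJoined G 2 (layerColoring G x) u v := by
  have hx : complLayer G x x = 0 := complLayer_self
  obtain ⟨a, hau, ha⟩ := exists_compl_adj_complLayer_eq one_lt_two hu
  have hxu : G.Adj x u := adj_of_complLayer_add_two_le x (by omega)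
  have hxz : G.Adj x z := adj_of_complLayer_add_two_le x (by omega)
  have haz : G.Adj a z := adj_of_complLayer_add_two_le x (by omega)
  have hav : G.Adj a v :=
    isClique_neighborSet_compl htf u hau.symm hadj (by rintro rfl; omega)
  have huv : u ≠ v := hadj.ne
  refine ⟨.cons hxu.symm (.cons hxz (.cons haz.symm (.cons hav .nil))), ?_, ?_⟩
  · grind [Walk.cons_isPath_iff, Walk.support_cons, Walk.support_nil, Walk.IsPath.nil]
  · simp [layerColoring, *]

lemma distProperJoined_of_complLayer_two_three
    (hu : complLayer G x u = 2) (hv : complLayer G x v = 3) :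
    DistProperJoined G 2 (layerColoring G x) u v := by
  have hx : complLayer G x x = 0 := complLayer_self
  have hxu : G.Adj x u := adj_of_complLayer_add_two_le x (by omega)
  have hxv : G.Adj x v := adj_of_complLayer_add_two_le x (by omega)
  refine ⟨.cons hxu.symm (.cons hxv .nil), ?_, ?_⟩
  · grind [Walk.cons_isPath_iff, Walk.support_cons, Walk.support_nil, Walk.IsPath.nil]
  · simp [layerColoring, *]

lemma distProperJoined_of_complLayer_three_three (htf : Gᶜ.CliqueFree 3)
    (hadj : Gᶜ.Adj u v) (hu : complLayer G x u = 3) (hv : complLayer G x v = 3) :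
    DistProperJoined G 2 (layerColoring G x) u v := by
  wlog huv : Gᶜ.dist x u ≤ Gᶜ.dist x v generalizing u v
  · exact (this hadj.symm hv hu (le_of_not_ge huv)).symm
  have hx : complLayer G x x = 0 := complLayer_self
  obtain ⟨b, hb, hbv⟩ := exists_complLayer_eq_two_and_adj htf hadj (by grind [complLayer]) huv
  have hxu : G.Adj x u := adj_of_complLayer_add_two_le x (by omega)
  have hxb : G.Adj x b := adj_of_complLayer_add_two_le x (by omega)
  have hne : u ≠ v := hadj.ne
  refine ⟨.cons hxu.symm (.cons hxb (.cons hbv .nil)), ?_, ?_⟩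
  · grind [Walk.cons_isPath_iff, Walk.support_cons, Walk.support_nil, Walk.IsPath.nil]
  · simp [layerColoring, *]

lemma distProperJoined_layerColoring (hc : Gᶜ.Connected) (htf : Gᶜ.CliqueFree 3)
    (hz : complLayer G x z = 3) (huv : u ≠ v) :
    DistProperJoined G 2 (layerColoring G x) u v := by
  wlog hle : complLayer G x u ≤ complLayer G x v generalizing u v
  · exact (this huv.symm (le_of_not_ge hle)).symm
  by_cases hG : G.Adj u v
  · exact distProperJoined_of_adj hG
  have hadj : Gᶜ.Adj u v := (compl_adj ..).mpr ⟨huv, hG⟩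
  have hsucc : complLayer G x v ≤ complLayer G x u + 1 := complLayer_le_succ hadj
  have hv3 : complLayer G x v ≤ 3 := complLayer_le_three
  obtain hv | hv : complLayer G x v = complLayer G x u ∨
      complLayer G x v = complLayer G x u + 1 := by omega
  · obtain hu | hu | hu | hu : complLayer G x u = 0 ∨ complLayer G x u = 1 ∨
        complLayer G x u = 2 ∨ complLayer G x u = 3 := by omega
    all_goals rw [hu] at hv
    · have hxu : x = u := eq_of_complLayer_eq_zero hc hu
      have hxv : x = v := eq_of_complLayer_eq_zero hc hv
      exact absurd (hxu.symm.trans hxv) huv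
    · exact absurd hadj (not_compl_adj_of_complLayer_eq_one htf hu hv)
    · exact distProperJoined_of_complLayer_two_two htf hz hadj hu hv
    · exact distProperJoined_of_complLayer_three_three htf hadj hu hv
  · obtain hu | hu | hu : complLayer G x u = 0 ∨ complLayer G x u = 1 ∨
        complLayer G x u = 2 := by omega
    all_goals rw [hu] at hv
    · exact distProperJoined_of_complLayer_zero_one hz hu hv
    · exact distProperJoined_of_complLayer_one_two hz hu hv
    · exact distProperJoined_of_complLayer_two_three hu hv

theorem isPCColoring_layerColoring (hc : Gᶜ.Connected) (htf : Gᶜ.CliqueFree 3)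
    (hxz : 3 ≤ Gᶜ.dist x z) : G.IsPCColoring 2 3 (layerColoring G x) :=
  ⟨fun e _ ↦ layerColoring_lt_three e,
    fun _ _ huv ↦ distProperJoined_layerColoring hc htf (min_eq_right hxz) huv⟩

end Layers

theorem pc_le_three_of_compl_triangleFree_diam_three_general {V : Type*} (G : SimpleGraph V)
    (hc : Gᶜ.Connected) (htf : Gᶜ.CliqueFree 3) (hdiam : 3 ≤ Gᶜ.ediam) :
    G.Connected ∧ G.pc 2 ≤ 3 := by
  have := hc.nonempty
  obtain ⟨x, z, hxz⟩ : ∃ x z, 2 < Gᶜ.dist x z :=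
    exists_lt_dist_of_lt_ediam hc (lt_of_lt_of_le (by norm_num) hdiam)
  have hcol : G.IsPCColoring 2 3 (layerColoring G x) := isPCColoring_layerColoring hc htf hxz
  exact ⟨connected_of_isPCColoring hcol, Nat.sInf_le ⟨_, hcol⟩⟩

/-- If the complement of `G` is connected, triangle-free and has diameter `3`,
then `G` is connected and `pc_{1,2}(G) ≤ 3`. -/
theorem pc_le_three_of_compl_triangleFree_diam_three {V : Type*} [Fintype V]
    (G : SimpleGraph V) (hc : Gᶜ.Connected) (htf : Gᶜ.CliqueFree 3)
    (hdiam : Gᶜ.diam = 3) :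
    G.Connected ∧ G.pc 2 ≤ 3 := by
  exact pc_le_three_of_compl_triangleFree_diam_three_general G hc htf
    ((ENat.toNat_eq_iff three_ne_zero).mp hdiam).ge
end

section
/- Let n₁, n₂ ≥ 1 and let T¹(n₁,n₂) be the tree obtained from the double star T(n₁,n₂) by subdividing one pendant edge once (equivalently, replacing one pendant edge by a path of length 2). Then T¹(n₁,n₂) has n = n₁ + n₂ + 3 vertices and pc_{1,2}(T¹(n₁,n₂)) = n − 2. -/
open SimpleGraph

/-- The tree `T¹(n₁, n₂)` obtained from the double star `T(n₁, n₂)` by subdividing one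
pendant edge once: two adjacent centers `inl 0` and `inl 1`, with `n₁` and `n₂` pendant
leaves respectively, and one extra vertex (`inr ()`) attached to the first leaf
of the second center (so that leaf's edge to the center is subdivided into a path
of length 2 ending at the new pendant vertex). -/
def doubleStarSub (n₁ n₂ : ℕ) : SimpleGraph ((Fin 2 ⊕ (Fin n₁ ⊕ Fin n₂)) ⊕ Unit) :=
  SimpleGraph.fromRel (fun a b =>
    (a = Sum.inl (Sum.inl 0) ∧ b = Sum.inl (Sum.inl 1)) ∨
    (a = Sum.inl (Sum.inl 0) ∧ ∃ i : Fin n₁, b = Sum.inl (Sum.inr (Sum.inl i))) ∨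
    (a = Sum.inl (Sum.inl 1) ∧ ∃ j : Fin n₂, b = Sum.inl (Sum.inr (Sum.inr j))) ∨
    (∃ j : Fin n₂, j.val = 0 ∧ a = Sum.inl (Sum.inr (Sum.inr j)) ∧ b = Sum.inr ()))

/-!
Paths in a tree are unique, so in a `(1,2)`-proper-path coloring of a tree *every* path is
distance `2`-proper: such colorings are exactly the strong edge-colorings. In a strong
edge-coloring all edges meeting a given edge `uv` have distinct colors, which requires
`deg u + deg v - 1` of them; at the two centers of `T¹(n₁,n₂)` this number is `n₁ + n₂ + 1`. That
many colors suffice, since the only remaining edge, the one at the end of the subdivided edge, can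
share its color with a pendant edge at the opposite center.
-/

section Trees

variable {V : Type*} {G : SimpleGraph V}

/-- A highest vertex of a cycle would have two neighbors that are not higher. -/
theorem isAcyclic_of_subsingleton_adj_le {α : Type*} [LinearOrder α] (height : V → α)
    (h : ∀ v, {w | G.Adj v w ∧ height w ≤ height v}.Subsingleton) : G.IsAcyclic := by
  classical
  intro u p hp
  obtain ⟨v, hv, hmax⟩ :=
    p.support.toFinset.exists_max_image height ⟨u, by simp⟩
  rw [List.mem_toFinset] at hv
  have hmax' : ∀ w ∈ (p.rotate v hv).support, height w ≤ height v := fun w hw =>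
    hmax w (by simpa using hw)
  have hcycle : (p.rotate v hv).IsCycle := by simpa using hp
  exact hcycle.snd_ne_penultimate <| h v
    ⟨Walk.adj_snd hcycle.not_nil, hmax' _ (Walk.getVert_mem_support _ _)⟩
    ⟨(Walk.adj_penultimate hcycle.not_nil).symm, hmax' _ (Walk.getVert_mem_support _ _)⟩

theorem reachable_of_forall_exists_adj_lt {α : Type*} [LT α] [WellFoundedLT α] (height : V → α)
    (root : V) (h : ∀ v ≠ root, ∃ w, G.Adj v w ∧ height w < height v) (v : V) :
    G.Reachable root v := by
  induction v using WellFounded.induction (InvImage.wf height wellFounded_lt) with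
  | _ v ih =>
    rcases eq_or_ne v root with rfl | hv
    · rfl
    · obtain ⟨w, hvw, hlt⟩ := h v hv
      exact (ih w hlt).trans hvw.symm.reachable

end Trees

/-- A *strong edge-coloring*: distinct edges that share an endpoint or are joined by an edge have
distinct colors. Values of `c` off the edge set are irrelevant. -/
def IsStrongEdgeColoring {V α : Type*} (G : SimpleGraph V) (c : Sym2 V → α) : Prop :=
  ∀ ⦃e⦄, e ∈ G.edgeSet → ∀ ⦃e'⦄, e' ∈ G.edgeSet →
    ∀ x ∈ e, ∀ y ∈ e', x = y ∨ G.Adj x y → c e = c e' → e = e'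

section Coloring

variable {V : Type*} {G : SimpleGraph V} {c : Sym2 V → ℕ} {k ℓ : ℕ}

theorem IsStrongEdgeColoring.degree_add_degree_le (hc : IsStrongEdgeColoring G c)
    (hk : ∀ e ∈ G.edgeSet, c e < k) {u v : V} [Fintype (G.neighborSet u)]
    [Fintype (G.neighborSet v)] (huv : G.Adj u v) : G.degree u + G.degree v ≤ k + 1 := by
  classical
  have hinter : G.incidenceFinset u ∩ G.incidenceFinset v = {s(u, v)} := by
    rw [← Finset.coe_inj]
    simpa using G.incidenceSet_inter_incidenceSet_of_adj huv
  have hmem {e : Sym2 V} (he : e ∈ G.incidenceFinset u ∪ G.incidenceFinset v) :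
      e ∈ G.edgeSet ∧ ∃ x ∈ e, x = u ∨ x = v := by
    simp only [Finset.mem_union, mem_incidenceFinset] at he
    rcases he with ⟨he, hx⟩ | ⟨he, hx⟩
    exacts [⟨he, u, hx, .inl rfl⟩, ⟨he, v, hx, .inr rfl⟩]
  have hunion : (G.incidenceFinset u ∪ G.incidenceFinset v).card ≤ (Finset.range k).card := by
    refine Finset.card_le_card_of_injOn c
      (fun e he => by simpa using hk e (hmem he).1) fun e he e' he' => ?_
    obtain ⟨he, x, hx, hxuv⟩ := hmem he
    obtain ⟨he', y, hy, hyuv⟩ := hmem he'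
    refine hc he he' x hx y hy ?_
    rcases hxuv with rfl | rfl <;> rcases hyuv with rfl | rfl <;> simp [huv, huv.symm]
  calc G.degree u + G.degree v
      = (G.incidenceFinset u ∪ G.incidenceFinset v).card + 1 := by
        rw [← card_incidenceFinset_eq_degree, ← card_incidenceFinset_eq_degree,
          ← Finset.card_union_add_card_inter, hinter, Finset.card_singleton]
    _ ≤ k + 1 := by simpa using hunion

theorem IsStrongEdgeColoring.isDistProper_two_of_isTrail (hc : IsStrongEdgeColoring G c) {u v : V}
    {p : G.Walk u v} (hp : p.IsTrail) : p.IsDistProper 2 c := by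
  intro i j hi hj hij hji heq
  have hnear : p.getVert (i + 1) = p.getVert j ∨ G.Adj (p.getVert (i + 1)) (p.getVert j) := by
    obtain rfl | rfl : j = i + 1 ∨ j = i + 2 := by omega
    · exact .inl rfl
    · exact .inr (p.adj_getVert_succ (by rw [Walk.length_edges] at hj; omega))
  have hedge : p.edges[i] = p.edges[j] :=
    hc (p.edges_subset_edgeSet (List.getElem_mem hi)) (p.edges_subset_edgeSet (List.getElem_mem hj))
      (p.getVert (i + 1)) (by simp [Walk.getElem_edges]) (p.getVert j)
      (by simp [Walk.getElem_edges]) hnear heq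
  exact hij.ne (hp.edges_nodup.getElem_inj_iff.mp hedge)

theorem isDistProper_of_isPath_of_isAcyclic (hG : G.IsAcyclic) (hc : G.IsPCColoring ℓ k c)
    {u v : V} {p : G.Walk u v} (hp : p.IsPath) : p.IsDistProper ℓ c := by
  rcases eq_or_ne u v with rfl | huv
  · intro i j hi
    simp [Walk.edges_eq_nil.mpr (Walk.isPath_iff_nil.mp hp)] at hi
  · obtain ⟨q, hq, hproper⟩ := hc.2 u v huv
    obtain rfl : p = q := congrArg Subtype.val <|
      (hG.subsingleton_path u v).elim ⟨p, hp⟩ ⟨q, hq⟩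
    exact hproper

theorem color_ne_of_adj_of_adj (hG : G.IsAcyclic) (hℓ : 1 ≤ ℓ) (hc : G.IsPCColoring ℓ k c)
    {a x b : V} (hax : G.Adj a x) (hxb : G.Adj x b) (hab : a ≠ b) : c s(a, x) ≠ c s(x, b) := by
  have hpath : (Walk.cons hax (Walk.cons hxb Walk.nil)).IsPath := by
    simp [hax.ne, hxb.ne, hab]
  exact isDistProper_of_isPath_of_isAcyclic hG hc hpath 0 1 (by simp) (by simp) one_pos (by omega)

theorem color_ne_of_adj_of_adj_of_adj (hG : G.IsAcyclic) (hℓ : 2 ≤ ℓ) (hc : G.IsPCColoring ℓ k c)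
    {a x y b : V} (hax : G.Adj a x) (hxy : G.Adj x y) (hyb : G.Adj y b) (hay : a ≠ y)
    (hab : a ≠ b) (hxb : x ≠ b) : c s(a, x) ≠ c s(y, b) := by
  have hpath : (Walk.cons hax (Walk.cons hxy (Walk.cons hyb Walk.nil))).IsPath := by
    simp [hax.ne, hxy.ne, hyb.ne, hay, hab, hxb]
  exact isDistProper_of_isPath_of_isAcyclic hG hc hpath 0 2 (by simp) (by simp) two_pos (by omega)

theorem isStrongEdgeColoring_of_isAcyclic (hG : G.IsAcyclic) (hℓ : 2 ≤ ℓ)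
    (hc : G.IsPCColoring ℓ k c) : IsStrongEdgeColoring G c := by
  intro e he e' he' x hx y hy hnear heq
  by_cases hshare : ∃ z, z ∈ e ∧ z ∈ e'
  · obtain ⟨z, ⟨a, rfl⟩, ⟨b, rfl⟩⟩ := hshare
    by_contra hne
    rw [Sym2.eq_swap] at heq
    exact color_ne_of_adj_of_adj hG (by omega) hc (G.adj_symm he) he'
      (fun hab => hne (congrArg (s(z, ·)) hab)) heq
  · obtain ⟨a, rfl⟩ := hx
    obtain ⟨b, rfl⟩ := hy
    simp only [Sym2.mem_iff, not_exists, not_and, not_or, forall_eq_or_imp, forall_eq] at hshare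
    obtain ⟨⟨hxy, hxb⟩, hay, hab⟩ := hshare
    rw [Sym2.eq_swap] at heq
    exact absurd heq <| color_ne_of_adj_of_adj_of_adj hG hℓ hc (G.adj_symm he)
      (hnear.resolve_left hxy) he' hay hab hxb

theorem isPCColoring_two_iff_of_isTree (hG : G.IsTree) :
    G.IsPCColoring 2 k c ↔ (∀ e ∈ G.edgeSet, c e < k) ∧ IsStrongEdgeColoring G c := by
  refine ⟨fun hc => ⟨hc.1, isStrongEdgeColoring_of_isAcyclic hG.isAcyclic le_rfl hc⟩,
    fun ⟨hk, hc⟩ => ⟨hk, fun u v _ => ?_⟩⟩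
  obtain ⟨p, hp⟩ := (hG.connected u v).exists_isPath
  exact ⟨p, hp, hc.isDistProper_two_of_isTrail hp.isTrail⟩

end Coloring

namespace doubleStarSub

/-- The vertices of `T¹(n₁,n₂)`. -/
abbrev Vertex (n₁ n₂ : ℕ) : Type := (Fin 2 ⊕ (Fin n₁ ⊕ Fin n₂)) ⊕ Unit

variable {n₁ n₂ : ℕ}

/-- The center with `n₁` pendant edges. -/
abbrev center₁ : Vertex n₁ n₂ := .inl (.inl 0)

/-- The center with `n₂` pendant edges in the double star, one of which is subdivided. -/
abbrev center₂ : Vertex n₁ n₂ := .inl (.inl 1)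

/-- The leaves at `center₁`. -/
abbrev leaf₁ (i : Fin n₁) : Vertex n₁ n₂ := .inl (.inr (.inl i))

/-- The leaves at `center₂` in the double star. In `T¹(n₁,n₂)` the vertex `leaf₂ 0` is no longer a
leaf but the subdividing vertex. -/
abbrev leaf₂ (j : Fin n₂) : Vertex n₁ n₂ := .inl (.inr (.inr j))

/-- The end of the subdivided pendant edge, attached to `leaf₂ 0`. -/
abbrev tip : Vertex n₁ n₂ := .inr ()

theorem adj_center₁_iff {v : Vertex n₁ n₂} :
    (doubleStarSub n₁ n₂).Adj center₁ v ↔ v = center₂ ∨ ∃ i, v = leaf₁ i := by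
  rcases v with (v | i | j) | _
  · fin_cases v <;> simp [doubleStarSub]
  all_goals simp [doubleStarSub]

theorem adj_center₂_iff {v : Vertex n₁ n₂} :
    (doubleStarSub n₁ n₂).Adj center₂ v ↔ v = center₁ ∨ ∃ j, v = leaf₂ j := by
  rcases v with (v | i | j) | _
  · fin_cases v <;> simp [doubleStarSub]
  all_goals simp [doubleStarSub]

theorem adj_leaf₁_iff {i : Fin n₁} {v : Vertex n₁ n₂} :
    (doubleStarSub n₁ n₂).Adj (leaf₁ i) v ↔ v = center₁ := by
  rcases v with (v | i | j) | _ <;> simp [doubleStarSub]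

theorem degree_center₁ [Fintype ((doubleStarSub n₁ n₂).neighborSet center₁)] :
    (doubleStarSub n₁ n₂).degree center₁ = n₁ + 1 := by
  classical
  have hneighbors : (doubleStarSub n₁ n₂).neighborFinset center₁ =
      insert center₂ (Finset.univ.image leaf₁) := by
    ext v
    simp [adj_center₁_iff, eq_comm]
  rw [← card_neighborFinset_eq_degree, hneighbors, Finset.card_insert_of_notMem (by simp),
    Finset.card_image_of_injective _ (fun i j h => by simpa using h), Finset.card_fin]

theorem degree_center₂ [Fintype ((doubleStarSub n₁ n₂).neighborSet center₂)] :
    (doubleStarSub n₁ n₂).degree center₂ = n₂ + 1 := by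
  classical
  have hneighbors : (doubleStarSub n₁ n₂).neighborFinset center₂ =
      insert center₁ (Finset.univ.image leaf₂) := by
    ext v
    simp [adj_center₂_iff, eq_comm]
  rw [← card_neighborFinset_eq_degree, hneighbors, Finset.card_insert_of_notMem (by simp),
    Finset.card_image_of_injective _ (fun i j h => by simpa using h), Finset.card_fin]

section Tree

variable [NeZero n₂]

theorem adj_leaf₂_iff {j : Fin n₂} {v : Vertex n₁ n₂} :
    (doubleStarSub n₁ n₂).Adj (leaf₂ j) v ↔ v = center₂ ∨ j = 0 ∧ v = tip := by
  rcases v with (v | i | j) | _ <;> simp [doubleStarSub]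

theorem adj_tip_iff {v : Vertex n₁ n₂} :
    (doubleStarSub n₁ n₂).Adj tip v ↔ v = leaf₂ 0 := by
  rcases v with (v | i | j) | _ <;> simp [doubleStarSub]

/-- The distance to `center₂`, which is taken as the root of the tree. -/
def height : Vertex n₁ n₂ → ℕ
  | .inl (.inl 0) => 1
  | .inl (.inl 1) => 0
  | .inl (.inr (.inl _)) => 2
  | .inl (.inr (.inr _)) => 1
  | .inr _ => 2

theorem isTree : (doubleStarSub n₁ n₂).IsTree := by
  constructor
  · refine (connected_iff_exists_forall_reachable _).mpr ⟨center₂,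
      reachable_of_forall_exists_adj_lt height center₂ fun v hv => ?_⟩
    rcases v with (v | i | j) | _
    · fin_cases v
      · exact ⟨center₂, adj_center₁_iff.mpr (.inl rfl), by simp [height]⟩
      · exact absurd rfl hv
    · exact ⟨center₁, adj_leaf₁_iff.mpr rfl, by simp [height]⟩
    · exact ⟨center₂, adj_leaf₂_iff.mpr (.inl rfl), by simp [height]⟩
    · exact ⟨leaf₂ 0, adj_tip_iff.mpr rfl, by simp [height]⟩
  · refine isAcyclic_of_subsingleton_adj_le height fun v w ⟨hw, hwv⟩ w' ⟨hw', hwv'⟩ => ?_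
    rcases v with (v | i | j) | _
    · fin_cases v
      · obtain rfl | ⟨i, rfl⟩ := adj_center₁_iff.mp hw <;>
          obtain rfl | ⟨i', rfl⟩ := adj_center₁_iff.mp hw' <;> simp_all [height]
      · obtain rfl | ⟨j, rfl⟩ := adj_center₂_iff.mp hw <;> simp [height] at hwv
    · rw [adj_leaf₁_iff.mp hw, adj_leaf₁_iff.mp hw']
    · obtain rfl | ⟨rfl, rfl⟩ := adj_leaf₂_iff.mp hw <;>
        obtain rfl | ⟨-, rfl⟩ := adj_leaf₂_iff.mp hw' <;> simp_all [height]
    · rw [adj_tip_iff.mp hw, adj_tip_iff.mp hw']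

theorem mem_edgeSet_iff {e : Sym2 (Vertex n₁ n₂)} :
    e ∈ (doubleStarSub n₁ n₂).edgeSet ↔ e = s(center₁, center₂) ∨ (∃ i, e = s(center₁, leaf₁ i)) ∨
      (∃ j, e = s(center₂, leaf₂ j)) ∨ e = s(leaf₂ 0, tip) := by
  constructor
  · induction e with | _ v w
    intro h
    rw [mem_edgeSet] at h
    rcases v with (v | i | j) | _
    · fin_cases v
      · obtain rfl | ⟨i, rfl⟩ := adj_center₁_iff.mp h <;> simp
      · obtain rfl | ⟨j, rfl⟩ := adj_center₂_iff.mp h <;> simp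
    · obtain rfl := adj_leaf₁_iff.mp h
      simp
    · obtain rfl | ⟨rfl, rfl⟩ := adj_leaf₂_iff.mp h <;> simp
    · obtain rfl := adj_tip_iff.mp h
      simp
  · rintro (rfl | ⟨i, rfl⟩ | ⟨j, rfl⟩ | rfl)
    · exact adj_center₁_iff.mpr (.inl rfl)
    · exact adj_center₁_iff.mpr (.inr ⟨i, rfl⟩)
    · exact adj_center₂_iff.mpr (.inr ⟨j, rfl⟩)
    · exact adj_leaf₂_iff.mpr (.inr ⟨rfl, rfl⟩)

end Tree

/-- The vertex labels whose differences give the edge-coloring `color`. -/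
def label : Vertex n₁ n₂ → ℕ
  | .inl (.inl _) => 0
  | .inl (.inr (.inl i)) => i + 1
  | .inl (.inr (.inr j)) => n₁ + j + 1
  | .inr _ => n₁

/-- An optimal coloring of `T¹(n₁,n₂)`: the color of an edge is the difference of the labels of its
endpoints, so that `0` is used between the centers, `1, …, n₁` on the leaf edges at `center₁`, and
`n₁ + 1, …, n₁ + n₂` on the other edges at `center₂`; the edge at `tip` repeats the color `1`. -/
def color : Sym2 (Vertex n₁ n₂) → ℕ :=
  Sym2.lift ⟨fun v w => Nat.dist (label v) (label w), fun _ _ => Nat.dist_comm _ _⟩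

@[simp]
theorem color_center₁_center₂ : color s((center₁ : Vertex n₁ n₂), center₂) = 0 := by
  simp [color, label]

@[simp]
theorem color_center₁_leaf₁ (i : Fin n₁) :
    color s((center₁ : Vertex n₁ n₂), leaf₁ i) = i + 1 := by
  simp [color, label, Nat.dist]

@[simp]
theorem color_center₂_leaf₂ (j : Fin n₂) :
    color s((center₂ : Vertex n₁ n₂), leaf₂ j) = n₁ + j + 1 := by
  simp [color, label, Nat.dist]

section Coloring

variable [NeZero n₂]

@[simp]
theorem color_leaf₂_tip : color s((leaf₂ 0 : Vertex n₁ n₂), tip) = 1 := by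
  simp [color, label, Nat.dist, add_assoc]

theorem color_injOn :
    Set.InjOn color ((doubleStarSub n₁ n₂).edgeSet \ {s(leaf₂ 0, tip)}) := by
  rintro e ⟨he, htip⟩ e' ⟨he', htip'⟩ heq
  obtain rfl | ⟨i, rfl⟩ | ⟨j, rfl⟩ | rfl := mem_edgeSet_iff.mp he <;>
    obtain rfl | ⟨i', rfl⟩ | ⟨j', rfl⟩ | rfl := mem_edgeSet_iff.mp he' <;>
    simp at heq htip htip' ⊢ <;> omega

theorem color_lt {e : Sym2 (Vertex n₁ n₂)} (he : e ∈ (doubleStarSub n₁ n₂).edgeSet) :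
    color e < n₁ + n₂ + 1 := by
  obtain rfl | ⟨i, rfl⟩ | ⟨j, rfl⟩ | rfl := mem_edgeSet_iff.mp he
  · simp
  · simp only [color_center₁_leaf₁]
    omega
  · simp only [color_center₂_leaf₂]
    omega
  · simp [NeZero.pos n₂]

variable [NeZero n₁]

theorem eq_of_color_eq_one {e : Sym2 (Vertex n₁ n₂)} (he : e ∈ (doubleStarSub n₁ n₂).edgeSet)
    (hcolor : color e = 1) : e = s(leaf₂ 0, tip) ∨ e = s(center₁, leaf₁ 0) := by
  obtain rfl | ⟨i, rfl⟩ | ⟨j, rfl⟩ | rfl := mem_edgeSet_iff.mp he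
  · simp at hcolor
  · obtain rfl : i = 0 := Fin.ext (by simpa using hcolor)
    exact .inr rfl
  · have hn₁ := NeZero.ne n₁
    rw [color_center₂_leaf₂] at hcolor
    omega
  · exact .inl rfl

theorem eq_tip_edge_of_color_eq {e : Sym2 (Vertex n₁ n₂)} (he : e ∈ (doubleStarSub n₁ n₂).edgeSet)
    {x y : Vertex n₁ n₂} (hx : x ∈ e) (hy : y ∈ s((leaf₂ 0 : Vertex n₁ n₂), tip))
    (hnear : x = y ∨ (doubleStarSub n₁ n₂).Adj x y)
    (hcolor : color e = color s((leaf₂ 0 : Vertex n₁ n₂), tip)) : e = s(leaf₂ 0, tip) := by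
  rw [color_leaf₂_tip] at hcolor
  refine (eq_of_color_eq_one he hcolor).resolve_right ?_
  rintro rfl
  obtain rfl | rfl := Sym2.mem_iff.mp hx <;> obtain rfl | rfl := Sym2.mem_iff.mp hy <;>
    simp [adj_center₁_iff, adj_leaf₁_iff] at hnear

theorem isStrongEdgeColoring_color : IsStrongEdgeColoring (doubleStarSub n₁ n₂) color := by
  intro e he e' he' x hx y hy hnear heq
  by_cases htip : e = s(leaf₂ 0, tip)
  · subst htip
    exact (eq_tip_edge_of_color_eq he' hy hx (hnear.imp Eq.symm Adj.symm) heq.symm).symm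
  by_cases htip' : e' = s(leaf₂ 0, tip)
  · subst htip'
    exact eq_tip_edge_of_color_eq he hx hy hnear heq
  exact color_injOn ⟨he, htip⟩ ⟨he', htip'⟩ heq

end Coloring

end doubleStarSub

/-- For `n₁, n₂ ≥ 1`, the tree `T¹(n₁,n₂)` has `n = n₁ + n₂ + 3` vertices and
`pc_{1,2}(T¹(n₁,n₂)) = n - 2`. -/
theorem pc_doubleStarSub (n₁ n₂ : ℕ) (h₁ : 1 ≤ n₁) (h₂ : 1 ≤ n₂) :
    Fintype.card ((Fin 2 ⊕ (Fin n₁ ⊕ Fin n₂)) ⊕ Unit) = n₁ + n₂ + 3 ∧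
      (doubleStarSub n₁ n₂).pc 2 = (n₁ + n₂ + 3) - 2 := by
  classical
  have : NeZero n₁ := ⟨by omega⟩
  have : NeZero n₂ := ⟨by omega⟩
  refine ⟨by simp; omega, IsLeast.csInf_eq ⟨⟨doubleStarSub.color, ?_⟩, ?_⟩⟩
  · exact (isPCColoring_two_iff_of_isTree doubleStarSub.isTree).mpr
      ⟨fun _ => doubleStarSub.color_lt, doubleStarSub.isStrongEdgeColoring_color⟩
  · rintro k ⟨c, hc⟩
    obtain ⟨hk, hstrong⟩ := (isPCColoring_two_iff_of_isTree doubleStarSub.isTree).mp hc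
    have hdegree :=
      hstrong.degree_add_degree_le hk (doubleStarSub.adj_center₁_iff.mpr (.inl rfl))
    rw [doubleStarSub.degree_center₁, doubleStarSub.degree_center₂] at hdegree
    omega
end
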